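/- Let B be a finite brace such that every Sylow subgroup of (B,+) and every Sylow subgroup of (B,·) is cyclic. Then B is supersoluble. -/

import Mathlib

/-- A (skew left) brace: a set with an additive group structure (not necessarily abelian)
and a multiplicative group structure sharing the same identity, satisfying the skew
distributive law `a * (b + c) = a * b + -a + a * c`. -/
class SkewBrace (B : Type*) extends AddGroup B, Group B where
  one_eq_zero : (1 : B) = (0 : B)
  skew_distrib : ∀ a b c : B, a * (b + c) = a * b + -a + a * c

/-- A group is supersoluble if it has a finite chain of normal subgroups with all
factors cyclic. -/
def Group.IsSupersoluble (G : Type*) [Group G] : Prop :=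
  ∃ (n : ℕ) (H : ℕ → Subgroup G),
    H 0 = ⊥ ∧ H n = ⊤ ∧ (∀ i, (H i).Normal) ∧ (∀ i, i < n → H i ≤ H (i + 1)) ∧
    ∀ i, i < n → ∃ x ∈ H (i + 1), ∀ y ∈ H (i + 1), ∃ k : ℤ, (x ^ k)⁻¹ * y ∈ H i

namespace SkewBrace

variable {B : Type*} [SkewBrace B]

/-- `lam a b = -a + a * b`, i.e. `λ_a(b)`. -/
def lam (a b : B) : B := -a + a * b

/-- the star operation `a ∗ b = λ_a(b) - b`. -/
def starOp (a b : B) : B := lam a b + -b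

/-- the additive commutator `[a,b]_+`. -/
def addCommutator (a b : B) : B := -a + -b + a + b

/-- A subbrace of `B`: a subset that is a subgroup of both `(B,+)` and `(B,·)`. -/
structure Subbrace (B : Type*) [SkewBrace B] where
  carrier : Set B
  zero_mem : (0 : B) ∈ carrier
  add_mem : ∀ {a b : B}, a ∈ carrier → b ∈ carrier → a + b ∈ carrier
  neg_mem : ∀ {a : B}, a ∈ carrier → -a ∈ carrier
  mul_mem : ∀ {a b : B}, a ∈ carrier → b ∈ carrier → a * b ∈ carrier
  inv_mem : ∀ {a : B}, a ∈ carrier → a⁻¹ ∈ carrier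

/-- An ideal of `B`: a subbrace that is normal in `(B,+)` and in `(B,·)` and is
invariant under all the maps `λ_b`. -/
structure BraceIdeal (B : Type*) [SkewBrace B] extends Subbrace B where
  addConj_mem : ∀ (b : B) {a : B}, a ∈ carrier → b + a + -b ∈ carrier
  mulConj_mem : ∀ (b : B) {a : B}, a ∈ carrier → b * a * b⁻¹ ∈ carrier
  lam_mem : ∀ (b : B) {a : B}, a ∈ carrier → lam b a ∈ carrier

/-- The additive subgroup underlying a subbrace. -/
def Subbrace.addSubgroup (S : Subbrace B) : AddSubgroup B where
  carrier := S.carrier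
  zero_mem' := S.zero_mem
  add_mem' := S.add_mem
  neg_mem' := S.neg_mem

/-- The multiplicative subgroup underlying a subbrace. -/
def Subbrace.subgroup (S : Subbrace B) : Subgroup B where
  carrier := S.carrier
  one_mem' := by rw [one_eq_zero]; exact S.zero_mem
  mul_mem' := S.mul_mem
  inv_mem' := S.inv_mem

/-- Given ideals `J ≤ I` of `B`, `MemSocQuotRel I J x` says that the coset of `x`
lies in `Soc(I/J) = Ker(λ) ∩ Z(I/J, +)` (for `I = B` take `I = Set.univ`). -/
def MemSocQuotRel (I J : Set B) (x : B) : Prop :=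
  x ∈ I ∧ (∀ y ∈ I, -y + lam x y ∈ J) ∧ ∀ y ∈ I, -(y + x) + (x + y) ∈ J

/-- Given ideals `J ≤ I` of `B`, `MemZetaQuotRel I J x` says that the coset of `x`
lies in `ζ(I/J) = Soc(I/J) ∩ Z(I/J, ·)`. -/
def MemZetaQuotRel (I J : Set B) (x : B) : Prop :=
  MemSocQuotRel I J x ∧ ∀ y ∈ I, (y * x)⁻¹ * (x * y) ∈ J

/-- The coset of `x` lies in `Soc(B/J)`. -/
def MemSocQuot (J : Set B) (x : B) : Prop := MemSocQuotRel Set.univ J x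

/-- The coset of `x` lies in `ζ(B/J)`. -/
def MemZetaQuot (J : Set B) (x : B) : Prop := MemZetaQuotRel Set.univ J x

/-- For ideals `I ≤ J`, the additive group of the quotient `J/I` is infinite cyclic. -/
def QuotAddInfCyclic (I J : Set B) : Prop :=
  ∃ x ∈ J, (∀ y ∈ J, ∃ n : ℤ, -(n • x) + y ∈ I) ∧ ∀ n : ℤ, n • x ∈ I → n = 0

/-- For ideals `I ≤ J`, the quotient `J/I` has prime order `p`. -/
def QuotPrimeOrder (I J : Set B) (p : ℕ) : Prop :=
  p.Prime ∧ ∃ x ∈ J, x ∉ I ∧ p • x ∈ I ∧ ∀ y ∈ J, ∃ n : ℤ, -(n • x) + y ∈ I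

/-- A brace is supersoluble if it has a finite chain of ideals each factor of which
either is additively infinite cyclic and contained in the socle of the corresponding
quotient, or has prime order. -/
def IsSupersoluble (B : Type*) [SkewBrace B] : Prop :=
  ∃ (n : ℕ) (I : ℕ → BraceIdeal B),
    (I 0).carrier = {0} ∧ (I n).carrier = Set.univ ∧
    (∀ i, i < n → (I i).carrier ⊆ (I (i + 1)).carrier) ∧
    ∀ i, i < n →
      (QuotAddInfCyclic (I i).carrier (I (i + 1)).carrier ∧
        ∀ x ∈ (I (i + 1)).carrier, MemSocQuot (I i).carrier x) ∨
      ∃ p : ℕ, QuotPrimeOrder (I i).carrier (I (i + 1)).carrier p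

/-- The upper socle series of the brace (carrier of the ideal) `I`. -/
def socChainRel (I : Set B) : ℕ → Set B
  | 0 => {0}
  | n + 1 => {x | MemSocQuotRel I (socChainRel I n) x}

/-- The upper central series of the brace (carrier of the ideal) `I`. -/
def zetaChainRel (I : Set B) : ℕ → Set B
  | 0 => {0}
  | n + 1 => {x | MemZetaQuotRel I (zetaChainRel I n) x}

/-- The upper socle series `Soc_n(B)` of `B`. -/
def socChain (B : Type*) [SkewBrace B] : ℕ → Set B := socChainRel Set.univ

/-- The upper central series `ζ_n(B)` of `B`. -/
def zetaChain (B : Type*) [SkewBrace B] : ℕ → Set B := zetaChainRel Set.univ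

/-- A brace is centrally nilpotent if its upper central series reaches `B`. -/
def IsCentrallyNilpotent (B : Type*) [SkewBrace B] : Prop :=
  ∃ m : ℕ, zetaChain B m = Set.univ

end SkewBrace

/-! ### Group-theoretic preliminaries -/

theorem zgroup_sylow_normal (n : ℕ) : ∀ (G : Type*) [Group G] [Finite G] [IsZGroup G],
    Nat.card G = n → ∀ (p : ℕ) [Fact p.Prime], (∀ q : ℕ, q.Prime → q ∣ Nat.card G → q ≤ p) →
    ∀ P : Sylow p G, (P : Subgroup G).Normal := by
  induction n using Nat.strong_induction_on with
  | _ n ih =>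
  intro G _ _ _ hn p hp hmax P
  by_cases h1 : Nat.card G = 1
  · have := (Nat.card_eq_one_iff_unique.mp h1).1
    rw [Subsingleton.elim (P : Subgroup G) ⊤]
    infer_instance
  have hq := Nat.minFac_prime h1
  have := Fact.mk hq
  let Q : Sylow (Nat.card G).minFac G := default
  have hQ : IsCyclic Q := IsZGroup.isZGroup _ hq Q
  obtain ⟨N, hN, hNc⟩ : ∃ N : Subgroup G, N.Normal ∧ N.IsComplement' Q :=
    ⟨_, MonoidHom.normal_ker _, hQ.isComplement' rfl⟩
  by_cases hqp : (Nat.card G).minFac = p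
  · -- `G` is a `p`-group
    have hG : IsPGroup p G := by
      rw [IsPGroup.iff_card]
      refine ⟨(Nat.card G).primeFactorsList.length, ?_⟩
      apply Nat.eq_prime_pow_of_unique_prime_dvd Nat.card_pos.ne'
      intro d hd hdG
      exact le_antisymm (hmax d hd hdG) (hqp ▸ Nat.minFac_le_of_dvd hd.two_le hdG)
    have : (P : Subgroup G) = ⊤ := by
      have hT : IsPGroup p (⊤ : Subgroup G) := hG.to_subgroup _
      exact (P.is_maximal' hT le_top).symm
    rw [this]
    infer_instance
  · -- `P ≤ N`
    have hidx : N.index = Nat.card Q := hNc.symm.index_eq_card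
    have hPN : (P : Subgroup G) ≤ N := by
      have hcop : (Nat.card P).Coprime N.index := by
        obtain ⟨a, ha⟩ := IsPGroup.iff_card.mp P.2
        obtain ⟨b, hb⟩ := IsPGroup.iff_card.mp Q.2
        rw [hidx]
        change Nat.Coprime (Nat.card (P : Subgroup G)) (Nat.card (Q : Subgroup G))
        rw [ha, hb]
        exact Nat.Coprime.pow _ _ ((Nat.coprime_primes hp.out hq).mpr (Ne.symm hqp))
      rw [← Subgroup.relIndex_eq_one]
      exact Nat.eq_one_of_dvd_coprimes hcop (Subgroup.relIndex_dvd_card _ _)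
        (Subgroup.relIndex_dvd_index_of_normal _ _)
    have hlt : Nat.card N < n := by
      have hm := N.card_mul_index
      have hne : Q.1 ≠ ⊥ := Q.ne_bot_of_dvd_card (Nat.card G).minFac_dvd
      have h2 : 1 < Nat.card (Q : Subgroup G) := (Subgroup.one_lt_card_iff_ne_bot _).mpr hne
      have h3 : 0 < Nat.card N := Nat.card_pos
      rw [hidx] at hm
      exact (lt_mul_of_one_lt_right h3 h2).trans_eq (hm.trans hn)
    have hPn := ih _ hlt N rfl p
      (fun q hq' hd => hmax q hq' (hd.trans (Subgroup.card_subgroup_dvd_card N))) (P.subtype hPN)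
    have := Sylow.characteristic_of_normal _ hPn
    have h4 : (((P.subtype hPN : Sylow p N) : Subgroup N).map N.subtype).Normal := inferInstance
    have h5 : ((P.subtype hPN : Sylow p N) : Subgroup N).map N.subtype = P := by
      simp [Sylow.coe_subtype, Subgroup.map_subgroupOf_eq_of_le hPN]
    rwa [h5] at h4

theorem zgroup_exists_order_p (G : Type*) [Group G] [Finite G] [IsZGroup G] (p : ℕ)
    [hp : Fact p.Prime] (hmax : ∀ q : ℕ, q.Prime → q ∣ Nat.card G → q ≤ p)
    (hd : p ∣ Nat.card G) :
    ∃ x : G, orderOf x = p ∧ ∀ y : G, y ^ p = 1 → y ∈ Subgroup.zpowers x := by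
  classical
  obtain ⟨x, hx⟩ := exists_prime_orderOf_dvd_card' p hd
  refine ⟨x, hx, fun y hy => ?_⟩
  let P : Sylow p G := default
  have hPn := zgroup_sylow_normal _ G rfl p hmax P
  have hmem : ∀ z : G, z ^ p = 1 → z ∈ P := by
    intro z hz
    have hz' : IsPGroup p (Subgroup.zpowers z) := by
      rcases (Nat.dvd_prime hp.out).mp (orderOf_dvd_of_pow_eq_one hz) with h | h
      · exact IsPGroup.of_card (n := 0) (by rw [Nat.card_zpowers, h, pow_zero])
      · exact IsPGroup.of_card (n := 1) (by rw [Nat.card_zpowers, h, pow_one])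
    obtain ⟨S, hS⟩ := hz'.exists_le_sylow
    have := Sylow.unique_of_normal P hPn
    rw [← Subsingleton.elim S P]
    exact hS (Subgroup.mem_zpowers z)
  have hxp : x ^ p = 1 := hx ▸ pow_orderOf_eq_one x
  have hPc : IsCyclic P := IsZGroup.isZGroup p hp.out P
  let x' : P := ⟨x, hmem x hxp⟩
  let y' : P := ⟨y, hmem y hy⟩
  have : Fintype P := Fintype.ofFinite _
  have hle := IsCyclic.card_pow_eq_one_le (α := P) hp.out.pos
  have hsub : (Finset.univ.filter fun z : P => z ∈ Subgroup.zpowers x') ⊆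
      Finset.univ.filter fun z : P => z ^ p = 1 := by
    intro z hz
    simp only [Finset.mem_filter, Finset.mem_univ, true_and] at hz ⊢
    obtain ⟨k, rfl⟩ := Subgroup.mem_zpowers_iff.mp hz
    have : x' ^ p = 1 := Subtype.ext hxp
    rw [← zpow_natCast, zpow_comm, zpow_natCast, this, one_zpow]
  have hcard : (Finset.univ.filter fun z : P => z ∈ Subgroup.zpowers x').card = p := by
    rw [← Fintype.card_subtype, ← Nat.card_eq_fintype_card]
    have h : orderOf x' = p := (Subgroup.orderOf_mk x _).trans hx
    exact (Nat.card_zpowers x').trans h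
  have heq := Finset.eq_of_subset_of_card_le hsub (by rw [hcard]; exact hle)
  have hy' : y' ∈ Finset.univ.filter fun z : P => z ^ p = 1 := by
    simp only [Finset.mem_filter, Finset.mem_univ, true_and]
    exact Subtype.ext hy
  rw [← heq] at hy'
  simp only [Finset.mem_filter, Finset.mem_univ, true_and] at hy'
  obtain ⟨k, hk⟩ := Subgroup.mem_zpowers_iff.mp hy'
  exact Subgroup.mem_zpowers_iff.mpr ⟨k, congrArg Subtype.val hk⟩

theorem zgroup_rel (G : Type*) [Group G] [Finite G] [IsZGroup G] (N : Subgroup G) (hN : N.Normal)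
    (p : ℕ) (hp : p.Prime) (hmax : ∀ q : ℕ, q.Prime → q ∣ N.index → q ≤ p)
    (hd : p ∣ N.index) :
    ∃ J : Subgroup G, J.Normal ∧ (∀ x, x ∈ J ↔ x ^ p ∈ N) ∧ Nat.card J = p * Nat.card N ∧
      ∃ x ∈ J, x ∉ N ∧ ∀ y ∈ J, ∃ n : ℤ, (x ^ n)⁻¹ * y ∈ N := by
  have := Fact.mk hp
  obtain ⟨xb, hx, hall⟩ := zgroup_exists_order_p (G ⧸ N) p hmax hd
  have hiff : ∀ y : G ⧸ N, y ∈ Subgroup.zpowers xb ↔ y ^ p = 1 := by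
    refine fun y => ⟨fun h => ?_, hall y⟩
    obtain ⟨k, rfl⟩ := Subgroup.mem_zpowers_iff.mp h
    rw [← zpow_natCast, zpow_comm, zpow_natCast, ← hx, pow_orderOf_eq_one, one_zpow]
  have hmem : ∀ x, x ∈ (Subgroup.zpowers xb).comap (QuotientGroup.mk' N) ↔ x ^ p ∈ N := by
    intro x
    rw [Subgroup.mem_comap, hiff, ← map_pow, QuotientGroup.mk'_apply, QuotientGroup.eq_one_iff]
  refine ⟨(Subgroup.zpowers xb).comap (QuotientGroup.mk' N), ⟨fun a ha g => ?_⟩, hmem, ?_, ?_⟩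
  · rw [hmem] at ha ⊢
    rw [conj_pow]
    exact hN.conj_mem _ ha g
  · have := QuotientGroup.card_preimage_mk N (Subgroup.zpowers xb : Set (G ⧸ N))
    have h2 : Nat.card (Subgroup.zpowers xb : Set (G ⧸ N)) = p := by
      rw [← hx]; exact Nat.card_zpowers xb
    rw [h2, mul_comm] at this
    exact this
  · obtain ⟨x, rfl⟩ := QuotientGroup.mk_surjective xb
    refine ⟨x, Subgroup.mem_zpowers _, fun h => ?_, fun y hy => ?_⟩
    · rw [(QuotientGroup.eq_one_iff x).mpr h, orderOf_one] at hx
      exact hp.one_lt.ne hx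
    · obtain ⟨k, hk⟩ := Subgroup.mem_zpowers_iff.mp hy
      refine ⟨k, ?_⟩
      rw [← QuotientGroup.eq, QuotientGroup.mk_zpow]
      exact hk

namespace SkewBrace

/-! ### Brace-theoretic part -/

section aux

variable {B : Type*} [SkewBrace B]

theorem lam_add (a b c : B) : lam a (b + c) = lam a b + lam a c := by
  unfold lam
  rw [skew_distrib]
  simp only [add_assoc]

theorem lam_nsmul (a b : B) (n : ℕ) : lam a (n • b) = n • lam a b := by
  induction n with
  | zero =>
    have h := lam_add a 0 0
    rw [add_zero] at h
    simpa using h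
  | succ n ih => rw [succ_nsmul, lam_add, ih, succ_nsmul]

theorem mul_eq_add_lam (a b : B) : a * b = a + lam a b := by
  unfold lam
  rw [add_neg_cancel_left]

theorem inv_eq_neg_lam (a : B) : a⁻¹ = -lam a⁻¹ a := by
  rw [eq_neg_iff_add_eq_zero, ← mul_eq_add_lam, inv_mul_cancel, one_eq_zero]

/-- The zero ideal. -/
def zeroIdeal (B : Type*) [SkewBrace B] : BraceIdeal B where
  carrier := {0}
  zero_mem := rfl
  add_mem := by
    rintro a b rfl rfl
    exact add_zero _
  neg_mem := by
    rintro a rfl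
    exact neg_zero
  mul_mem := by
    rintro a b rfl rfl
    change (0 : B) * 0 = 0
    rw [← one_eq_zero, one_mul]
  inv_mem := by
    rintro a rfl
    change (0 : B)⁻¹ = 0
    rw [← one_eq_zero, inv_one]
  addConj_mem := by
    rintro b a rfl
    change b + 0 + -b = 0
    simp
  mulConj_mem := by
    rintro b a rfl
    change b * 0 * b⁻¹ = 0
    rw [← one_eq_zero]
    simp
  lam_mem := by
    rintro b a rfl
    change lam b 0 = 0
    have h := lam_nsmul b 0 0
    simpa using h

theorem exists_next [Finite B] [IsZGroup B] [IsZGroup (Multiplicative B)] (I : BraceIdeal B)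
    (hI : I.carrier ≠ Set.univ) :
    ∃ J : BraceIdeal B, I.carrier ⊂ J.carrier ∧ ∃ p, QuotPrimeOrder I.carrier J.carrier p := by
  classical
  let M : Subgroup B := I.toSubbrace.subgroup
  let A : Subgroup (Multiplicative B) := AddSubgroup.toSubgroup I.toSubbrace.addSubgroup
  have hM : M.Normal := ⟨fun a ha g => I.mulConj_mem g ha⟩
  have hA : A.Normal := ⟨fun a ha g => I.addConj_mem g.toAdd ha⟩
  have hcard : Nat.card A = Nat.card M := rfl
  have hidx : A.index = M.index := by
    have h1 := A.card_mul_index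
    have h2 := M.card_mul_index
    have h3 : Nat.card (Multiplicative B) = Nat.card B := rfl
    rw [h3, ← h2, hcard] at h1
    exact Nat.eq_of_mul_eq_mul_left Nat.card_pos h1
  have hM1 : M.index ≠ 1 := by
    intro h
    apply hI
    rw [Subgroup.index_eq_one] at h
    exact congrArg (fun H : Subgroup B => (H : Set B)) h
  have hM0 : M.index ≠ 0 := Subgroup.FiniteIndex.index_ne_zero
  obtain ⟨p, hp, hd, hmax⟩ : ∃ p : ℕ, p.Prime ∧ p ∣ M.index ∧
      ∀ q : ℕ, q.Prime → q ∣ M.index → q ≤ p := by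
    have hne : M.index.primeFactors.Nonempty :=
      ⟨_, Nat.mem_primeFactors.mpr ⟨Nat.minFac_prime hM1, Nat.minFac_dvd _, hM0⟩⟩
    have h := Nat.mem_primeFactors.mp (Finset.max'_mem _ hne)
    exact ⟨_, h.1, h.2.1, fun q hq hqd =>
      Finset.le_max' _ _ (Nat.mem_primeFactors.mpr ⟨hq, hqd, hM0⟩)⟩
  obtain ⟨J, hJn, hJ, hJc, x, hxJ, hxA, hxg⟩ :=
    zgroup_rel (Multiplicative B) A hA p hp (hidx ▸ hmax) (hidx ▸ hd)
  obtain ⟨K, hKn, hK, hKc, -⟩ := zgroup_rel B M hM p hp hmax hd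
  have hJ' : ∀ b : B, Multiplicative.ofAdd b ∈ J ↔ p • b ∈ I.carrier := fun b =>
    hJ (Multiplicative.ofAdd b)
  have hlam : ∀ (b : B) {a : B}, Multiplicative.ofAdd a ∈ J →
      Multiplicative.ofAdd (lam b a) ∈ J := by
    intro b a ha
    rw [hJ'] at ha ⊢
    rw [← lam_nsmul]
    exact I.lam_mem b ha
  have hmul : ∀ {a b : B}, Multiplicative.ofAdd a ∈ J → Multiplicative.ofAdd b ∈ J →
      Multiplicative.ofAdd (a * b) ∈ J := by
    intro a b ha hb
    rw [mul_eq_add_lam]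
    exact J.mul_mem ha (hlam a hb)
  have hinv : ∀ {a : B}, Multiplicative.ofAdd a ∈ J → Multiplicative.ofAdd (a⁻¹) ∈ J := by
    intro a ha
    rw [inv_eq_neg_lam]
    exact J.inv_mem (hlam _ ha)
  have hIJ : ∀ a ∈ I.carrier, Multiplicative.ofAdd a ∈ J := fun a ha =>
    (hJ _).mpr (A.pow_mem (x := Multiplicative.ofAdd a) ha p)
  -- `J` as a multiplicative subgroup
  let L : Subgroup B :=
    { carrier := {b | Multiplicative.ofAdd b ∈ J}
      one_mem' := hIJ _ M.one_mem
      mul_mem' := hmul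
      inv_mem' := hinv }
  have hLc : Nat.card L = p * Nat.card M := hJc
  have hML : M ≤ L := hIJ
  have hrel : M.relIndex L = p := by
    have h1 := (M.subgroupOf L).card_mul_index
    rw [Nat.card_congr (Subgroup.subgroupOfEquivOfLe hML).toEquiv, hLc, mul_comm p] at h1
    exact Nat.eq_of_mul_eq_mul_left Nat.card_pos h1
  have hLK : L = K := by
    apply Subgroup.eq_of_le_of_card_ge
    · intro y hy
      rw [hK]
      have := M.pow_relIndex_mem hy
      rwa [hrel] at this
    · rw [hLc, hKc]
  have hLn : L.Normal := hLK ▸ hKn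
  refine ⟨{ carrier := {b | Multiplicative.ofAdd b ∈ J}
            zero_mem := J.one_mem
            add_mem := fun ha hb => J.mul_mem ha hb
            neg_mem := fun ha => J.inv_mem ha
            mul_mem := hmul
            inv_mem := hinv
            addConj_mem := fun b a ha => hJn.conj_mem _ ha (Multiplicative.ofAdd b)
            mulConj_mem := fun b a ha => hLn.conj_mem _ ha b
            lam_mem := hlam }, ?_, p, hp, x.toAdd, hxJ, hxA, (hJ x).mp hxJ, hxg⟩
  exact ⟨hIJ, fun h => hxA (h hxJ)⟩

end aux

theorem isSupersoluble_of_isZGroup (B : Type*) [SkewBrace B] [Finite B] [IsZGroup B]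
    [IsZGroup (Multiplicative B)] : IsSupersoluble B := by
  classical
  have hex : ∀ I : BraceIdeal B, ∃ J : BraceIdeal B, I.carrier ≠ Set.univ →
      I.carrier ⊂ J.carrier ∧ ∃ p, QuotPrimeOrder I.carrier J.carrier p := by
    intro I
    by_cases h : I.carrier = Set.univ
    · exact ⟨I, fun h' => absurd h h'⟩
    · obtain ⟨J, hJ⟩ := exists_next I h
      exact ⟨J, fun _ => hJ⟩
  choose next hnext using hex
  let I : ℕ → BraceIdeal B := fun n => next^[n] (zeroIdeal B)
  have hI : ∀ n, I (n + 1) = next (I n) := fun n => Function.iterate_succ_apply' _ _ _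
  have hreach : ∃ n, (I n).carrier = Set.univ := by
    by_contra! hne
    have hmono : StrictMono fun n => (I n).carrier := by
      apply strictMono_nat_of_lt_succ
      intro n
      rw [hI]
      exact (hnext _ (hne n)).1
    exact not_injective_infinite_finite _ hmono.injective
  refine ⟨Nat.find hreach, I, rfl, Nat.find_spec hreach, fun i hi => ?_, fun i hi => Or.inr ?_⟩
  · rw [hI]
    exact (hnext _ (Nat.find_min hreach hi)).1.1
  · rw [hI]
    exact (hnext _ (Nat.find_min hreach hi)).2

end SkewBrace

namespace SkewBrace

/-- A finite brace all of whose additive and multiplicative Sylow subgroups are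
cyclic is supersoluble. (The Sylow subgroups of the additive group `(B,+)` are
the Sylow subgroups of `Multiplicative B`.) -/
theorem isSupersoluble_of_sylow_cyclic (B : Type*) [SkewBrace B] [Finite B]
    (hadd : ∀ (p : ℕ), p.Prime → ∀ P : Sylow p (Multiplicative B), IsCyclic P)
    (hmul : ∀ (p : ℕ), p.Prime → ∀ P : Sylow p B, IsCyclic P) :
    IsSupersoluble B := by
  have : IsZGroup B := ⟨hmul⟩
  have : IsZGroup (Multiplicative B) := ⟨hadd⟩
  exact isSupersoluble_of_isZGroup B

end SkewBrace
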